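/- Suppose ∫_{(0,1)} ξ ln(1/ξ) ν(dξ) < ∞ and ∫_{(1,∞)} ν(dξ) < ∞. Then for every t > 0 the function u ↦ exp(∫₀^t ∫_{(0,∞)} (exp(ξ u e^{-as}/(1 - (σ²/(2a))(1-e^{-as})u)) - 1) ν(dξ) ds), defined for Re u ≤ 0, equals exp(λ(ρ̂(u) - 1)) for some finite λ ≥ 0 and some probability measure ρ on [0,∞) with transform ρ̂(u) = ∫ e^{ux} ρ(dx); in particular it is the transform of a compound Poisson distribution, which assigns positive mass to {0} (equal to e^{-λ}). -/

import Mathlib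

open MeasureTheory ENNReal

/-!
The Bessel distribution with parameters `α, β` is the law of a Poisson(`α`) number of independent
exponential jumps of mean `1 / β`, so its transform is `u ↦ exp (α u / (β - u))`. Hence the double
integral in the theorem is the integral of `exp (u x) - 1` against a mixture of Bessel
distributions. The mixture may have infinite mass at `0`, but there the integrand vanishes; its mass
off `0` is `λ = ∫∫ (1 - e^{-α}) ν(dξ) ds`. As `α ≤ C ξ / s`, the integrand is at most
`min 1 (C ξ / s)`, whose integral over `s ∈ (0, t)` is of order `ξ log (1 / ξ)`, so `λ < ∞`.
Normalising the mixture off `0` gives `ρ`.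
-/

open ProbabilityTheory
open scoped NNReal Nat

section ConvPow

variable {G : Type*} [AddMonoid G] [MeasurableSpace G]

/-- The `n`-fold convolution power of a measure on an additive monoid, starting from the Dirac mass
at `0`. -/
noncomputable def convPow (μ : Measure G) : ℕ → Measure G
  | 0 => Measure.dirac 0
  | n + 1 => μ ∗ convPow μ n

variable [MeasurableAdd₂ G] {μ : Measure G}

instance isProbabilityMeasure_convPow [IsProbabilityMeasure μ] (n : ℕ) :
    IsProbabilityMeasure (convPow μ n) := by
  induction n with
  | zero => exact Measure.dirac.isProbabilityMeasure
  | succ n ih => exact Measure.probabilitymeasure_of_probabilitymeasures_conv μ (convPow μ n)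

instance sFinite_convPow [SFinite μ] (n : ℕ) : SFinite (convPow μ n) := by
  induction n with
  | zero => exact inferInstanceAs (SFinite (Measure.dirac 0))
  | succ n ih => exact inferInstanceAs (SFinite (μ ∗ convPow μ n))

lemma ae_mem_convPow {S : AddSubmonoid G} (hS : MeasurableSet (S : Set G))
    (h : ∀ᵐ x ∂μ, x ∈ S) (n : ℕ) : ∀ᵐ x ∂convPow μ n, x ∈ S := by
  induction n with
  | zero => exact (ae_dirac_iff hS).2 S.zero_mem
  | succ n ih =>
    refine (ae_map_iff (by fun_prop) hS).2 ?_
    filter_upwards [Measure.quasiMeasurePreserving_fst.ae h,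
      Measure.quasiMeasurePreserving_snd.ae ih] with p h₁ h₂ using S.add_mem h₁ h₂

variable {𝕜 : Type*} [RCLike 𝕜] {f : AddChar G 𝕜}

lemma integrable_addChar_convPow (hfm : Measurable f) (hf : Integrable f μ) (n : ℕ) :
    Integrable f (convPow μ n) := by
  induction n with
  | zero => exact integrable_dirac' hfm.stronglyMeasurable (by simp)
  | succ n ih =>
    refine (integrable_map_measure hfm.aestronglyMeasurable (by fun_prop)).2 ?_
    simpa only [Function.comp_def, AddChar.map_add_eq_mul] using hf.mul_prod ih

lemma integral_addChar_convPow [SFinite μ] (hfm : Measurable f) (hf : Integrable f μ) (n : ℕ) :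
    ∫ x, f x ∂convPow μ n = (∫ x, f x ∂μ) ^ n := by
  induction n with
  | zero => simp [convPow, integral_dirac' _ _ hfm.stronglyMeasurable]
  | succ n ih =>
    rw [convPow, integral_conv (integrable_addChar_convPow hfm hf (n + 1))]
    simp_rw [AddChar.map_add_eq_mul, integral_const_mul, integral_mul_const, ih, pow_succ']

end ConvPow

section CompoundPoisson

/-- The Poisson distributions, as a kernel from the rate to the number of points. -/
noncomputable def poissonCountKernel : Kernel ℝ≥0 ℕ where
  toFun := poissonMeasure
  measurable' := by
    refine Measure.measurable_of_measurable_coe _ fun s hs ↦ ?_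
    simp only [poissonMeasure, Measure.sum_apply _ hs, Measure.smul_apply, smul_eq_mul]
    fun_prop

instance : IsMarkovKernel poissonCountKernel :=
  ⟨fun r ↦ inferInstanceAs (IsProbabilityMeasure (poissonMeasure r))⟩

variable {G : Type*} [AddMonoid G] [MeasurableSpace G]

/-- The compound Poisson distributions with jump distribution `μ`, as a kernel from the rate: the
laws of the sum of a Poisson number of independent jumps. -/
noncomputable def compoundPoisson (μ : Measure G) : Kernel ℝ≥0 G :=
  Kernel.ofFunOfCountable (convPow μ) ∘ₖ poissonCountKernel

lemma compoundPoisson_apply (μ : Measure G) (r : ℝ≥0) :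
    compoundPoisson μ r = (poissonMeasure r).bind (convPow μ) :=
  Kernel.comp_apply _ _ r

lemma exp_neg_le_compoundPoisson_singleton_zero [MeasurableSingletonClass G] (μ : Measure G)
    (r : ℝ≥0) :
    ENNReal.ofReal (Real.exp (-r)) ≤ compoundPoisson μ r {0} := by
  rw [compoundPoisson_apply,
    Measure.bind_apply (measurableSet_singleton 0) (measurable_of_countable _).aemeasurable]
  calc ENNReal.ofReal (Real.exp (-r)) = ∫⁻ n in {0}, convPow μ n {0} ∂poissonMeasure r := by
        simp [convPow, poissonMeasure_singleton]
    _ ≤ ∫⁻ n, convPow μ n {0} ∂poissonMeasure r := setLIntegral_le_lintegral _ _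

variable [MeasurableAdd₂ G] {μ : Measure G}

instance [IsProbabilityMeasure μ] : IsMarkovKernel (compoundPoisson μ) := by
  have : IsMarkovKernel (Kernel.ofFunOfCountable (convPow μ)) := ⟨isProbabilityMeasure_convPow⟩
  exact Kernel.IsMarkovKernel.comp _ _

lemma ae_mem_compoundPoisson {S : AddSubmonoid G} (hS : MeasurableSet (S : Set G))
    (h : ∀ᵐ x ∂μ, x ∈ S) (r : ℝ≥0) : ∀ᵐ x ∂compoundPoisson μ r, x ∈ S :=
  (Measure.ae_comp_iff (κ := Kernel.ofFunOfCountable (convPow μ)) hS).2 <|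
    .of_forall <| ae_mem_convPow hS h

variable [SFinite μ] {f : AddChar G ℂ}

lemma integrable_addChar_compoundPoisson (hfm : Measurable f) (hf : Integrable f μ) (r : ℝ≥0) :
    Integrable f (compoundPoisson μ r) := by
  let g : AddChar G ℝ := (normHom : ℂ →*₀ ℝ).toMonoidHom.compAddChar f
  have hg (n : ℕ) : ∫ x, ‖f x‖ ∂convPow μ n = (∫ x, ‖f x‖ ∂μ) ^ n :=
    integral_addChar_convPow (f := g) hfm.norm hf.norm n
  refine (Measure.integrable_comp_iff (κ := Kernel.ofFunOfCountable (convPow μ))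
    hfm.aestronglyMeasurable).2 ⟨.of_forall <| integrable_addChar_convPow hfm hf, ?_⟩
  refine (integrable_poissonMeasure_iff (r := r)).2 ?_
  refine ((Real.summable_pow_div_factorial (r * ∫ x, ‖f x‖ ∂μ)).mul_left (Real.exp (-r))).congr
    fun n ↦ ?_
  rw [show ∫ x, ‖f x‖ ∂(Kernel.ofFunOfCountable (convPow μ) n) = _ from hg n,
    Real.norm_of_nonneg (by positivity)]
  ring

lemma integral_addChar_compoundPoisson (hfm : Measurable f) (hf : Integrable f μ) (r : ℝ≥0) :
    ∫ x, f x ∂compoundPoisson μ r = Complex.exp (r * (∫ x, f x ∂μ - 1)) := by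
  have hexp := (NormedSpace.expSeries_div_hasSum_exp ((r : ℂ) * ∫ x, f x ∂μ)).mul_left
    (Complex.exp (-r))
  calc ∫ x, f x ∂compoundPoisson μ r
      = ∫ n, ∫ x, f x ∂convPow μ n ∂poissonMeasure r :=
        Kernel.integral_comp (integrable_addChar_compoundPoisson hfm hf r)
    _ = ∑' n : ℕ, Complex.exp (-r) * ((r * ∫ x, f x ∂μ) ^ n / n !) := by
        rw [integral_poissonMeasure]
        refine tsum_congr fun n ↦ ?_
        rw [integral_addChar_convPow hfm hf, Complex.real_smul]
        push_cast
        ring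
    _ = Complex.exp (r * (∫ x, f x ∂μ - 1)) := by
        rw [hexp.tsum_eq, ← Complex.exp_eq_exp_ℂ, ← Complex.exp_add]
        ring_nf

end CompoundPoisson

section ExpAddChar

/-- The function `x ↦ exp (u x)` as a character of the additive group `ℝ`; its integral against a
measure is the transform of that measure at `u`. -/
noncomputable def expAddChar (u : ℂ) : AddChar ℝ ℂ where
  toFun x := Complex.exp (u * x)
  map_zero_eq_one' := by simp
  map_add_eq_mul' x y := by rw [← Complex.exp_add, Complex.ofReal_add, mul_add]

lemma expAddChar_apply (u : ℂ) (x : ℝ) : expAddChar u x = Complex.exp (u * x) := rfl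

@[fun_prop]
lemma measurable_expAddChar (u : ℂ) : Measurable (expAddChar u) := by
  change Measurable fun x : ℝ ↦ Complex.exp (u * x)
  fun_prop

lemma norm_expAddChar_le_one {u : ℂ} (hu : u.re ≤ 0) {x : ℝ} (hx : 0 ≤ x) :
    ‖expAddChar u x‖ ≤ 1 := by
  rw [expAddChar_apply, Complex.norm_exp, Real.exp_le_one_iff]
  simpa using mul_nonpos_of_nonpos_of_nonneg hu hx

lemma integrable_expAddChar {μ : Measure ℝ} [IsFiniteMeasure μ] (hμ : ∀ᵐ x ∂μ, 0 ≤ x) {u : ℂ}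
    (hu : u.re ≤ 0) : Integrable (expAddChar u) μ :=
  .of_bound (by fun_prop) 1 <| hμ.mono fun _ ↦ norm_expAddChar_le_one hu

end ExpAddChar

section Bessel

instance : IsProbabilityMeasure (expMeasure 1) := isProbabilityMeasure_expMeasure one_pos

lemma expMeasure_eq_withDensity_restrict_Ici (r : ℝ) :
    expMeasure r =
      (volume.restrict (Set.Ici 0)).withDensity fun x ↦
        ENNReal.ofReal (r * Real.exp (-(r * x))) := by
  rw [← withDensity_indicator measurableSet_Ici]
  change volume.withDensity (exponentialPDF r) = _
  congr 1 with x
  by_cases hx : 0 ≤ x <;> simp [exponentialPDF_eq, hx]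

lemma ae_nonneg_expMeasure (r : ℝ) : ∀ᵐ x ∂expMeasure r, 0 ≤ x := by
  rw [expMeasure_eq_withDensity_restrict_Ici]
  exact (withDensity_absolutelyContinuous _ _).ae_le (ae_restrict_mem measurableSet_Ici)

lemma integral_expAddChar_expMeasure {r : ℝ} (hr : 0 < r) {u : ℂ} (hu : u.re < r) :
    ∫ x, expAddChar u x ∂expMeasure r = r / (r - u) := by
  have hre : (u - r).re < 0 := by simpa using hu
  calc ∫ x, expAddChar u x ∂expMeasure r
      = ∫ x in Set.Ioi (0 : ℝ), r * Complex.exp ((u - r) * x) := by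
        rw [expMeasure_eq_withDensity_restrict_Ici,
          integral_withDensity_eq_integral_toReal_smul (by fun_prop) (by simp),
          integral_Ici_eq_integral_Ioi]
        refine integral_congr_ae (.of_forall fun x ↦ ?_)
        dsimp only
        rw [ENNReal.toReal_ofReal (by positivity), expAddChar_apply, Complex.real_smul]
        push_cast
        rw [mul_assoc, ← Complex.exp_add]
        ring_nf
    _ = r / (r - u) := by
        rw [integral_const_mul, integral_exp_mul_complex_Ioi hre]
        simp only [Complex.ofReal_zero, mul_zero, Complex.exp_zero]
        rw [← neg_sub (r : ℂ) u, neg_div_neg_eq, mul_one_div]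

/-- The Bessel distributions, as a kernel from the parameters `(α, θ)`: the law of `θ` times a
Poisson (with mean `α`) number of independent standard exponential variables. In the usual
parametrisation by `α` and `β` the mean jump is `θ = β⁻¹`; allowing `θ = 0` keeps the kernel Markov
for all parameters. -/
noncomputable def besselKernel : Kernel (ℝ≥0 × ℝ) ℝ :=
  (compoundPoisson (expMeasure 1) ∥ₖ Kernel.id).map fun p ↦ p.2 * p.1

lemma besselKernel_apply (α : ℝ≥0) (θ : ℝ) :
    besselKernel (α, θ) = (compoundPoisson (expMeasure 1) α).map fun x ↦ θ * x := by
  rw [besselKernel, Kernel.map_apply _ (by fun_prop), Kernel.parallelComp_apply, Kernel.id_apply,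
    Measure.prod_dirac, Measure.map_map (by fun_prop) (by fun_prop)]
  rfl

instance : IsMarkovKernel besselKernel := Kernel.IsMarkovKernel.map _ (by fun_prop)

lemma ae_nonneg_besselKernel (α : ℝ≥0) {θ : ℝ} (hθ : 0 ≤ θ) :
    ∀ᵐ x ∂besselKernel (α, θ), 0 ≤ x := by
  rw [besselKernel_apply, ae_map_iff (by fun_prop) measurableSet_Ici]
  filter_upwards [ae_mem_compoundPoisson (S := AddSubmonoid.nonneg ℝ) measurableSet_Ici
    (ae_nonneg_expMeasure 1) α] with x hx using mul_nonneg hθ hx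

lemma integral_expAddChar_besselKernel (α : ℝ≥0) {θ : ℝ} (hθ : 0 ≤ θ) {u : ℂ} (hu : u.re ≤ 0) :
    ∫ x, expAddChar u x ∂besselKernel (α, θ) = Complex.exp (α * ((1 - θ * u)⁻¹ - 1)) := by
  have hθu : (θ * u).re ≤ 0 := by simpa using mul_nonpos_of_nonneg_of_nonpos hθ hu
  calc ∫ x, expAddChar u x ∂besselKernel (α, θ)
      = ∫ x, expAddChar (θ * u) x ∂compoundPoisson (expMeasure 1) α := by
        rw [besselKernel_apply, integral_map (by fun_prop) (by fun_prop)]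
        simp only [expAddChar_apply]
        push_cast
        simp only [mul_left_comm, mul_comm]
    _ = Complex.exp (α * ((1 - θ * u)⁻¹ - 1)) := by
        rw [integral_addChar_compoundPoisson (measurable_expAddChar _)
          (integrable_expAddChar (ae_nonneg_expMeasure 1) hθu),
          integral_expAddChar_expMeasure one_pos (hθu.trans_lt one_pos), Complex.ofReal_one,
          one_div]

lemma besselKernel_compl_singleton_zero_le (α : ℝ≥0) (θ : ℝ) :
    besselKernel (α, θ) {0}ᶜ ≤ ENNReal.ofReal (1 - Real.exp (-α)) := by
  calc besselKernel (α, θ) {0}ᶜ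
      ≤ compoundPoisson (expMeasure 1) α {0}ᶜ := by
        rw [besselKernel_apply, Measure.map_apply (by fun_prop) (by measurability)]
        exact measure_mono fun x ↦ mt fun hx ↦ by simp_all
    _ ≤ ENNReal.ofReal (1 - Real.exp (-α)) := by
        rw [prob_compl_eq_one_sub (measurableSet_singleton 0),
          ENNReal.ofReal_sub _ (Real.exp_nonneg _), ENNReal.ofReal_one]
        gcongr
        exact exp_neg_le_compoundPoisson_singleton_zero _ α

end Bessel

section Mixture

variable {X : Type*} [MeasurableSpace X] {P : Measure X} {κ : Kernel X ℝ}

lemma integrable_expAddChar_sub_one_comp (hfin : (κ ∘ₘ P) {0}ᶜ ≠ ⊤)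
    (hnonneg : ∀ᵐ x ∂(κ ∘ₘ P), 0 ≤ x) {u : ℂ} (hu : u.re ≤ 0) :
    Integrable (fun x ↦ expAddChar u x - 1) (κ ∘ₘ P) := by
  have hsupp : Function.support (fun x ↦ expAddChar u x - 1) ⊆ {0}ᶜ := by
    rintro x hx rfl
    simp at hx
  have : IsFiniteMeasure ((κ ∘ₘ P).restrict {0}ᶜ) := isFiniteMeasure_restrict.2 hfin
  rw [← integrableOn_iff_integrable_of_support_subset hsupp]
  exact (integrable_expAddChar (ae_restrict_of_ae hnonneg) hu).sub (integrable_const 1)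

variable [IsMarkovKernel κ]

lemma integral_expAddChar_sub_one_ae_eq (hnonneg : ∀ᵐ x ∂(κ ∘ₘ P), 0 ≤ x) {u : ℂ}
    (hu : u.re ≤ 0) :
    (fun p ↦ ∫ x, (expAddChar u x - 1) ∂κ p) =ᵐ[P] fun p ↦ ∫ x, expAddChar u x ∂κ p - 1 := by
  filter_upwards [Measure.ae_ae_of_ae_comp hnonneg] with p hp
  rw [integral_sub (integrable_expAddChar hp hu) (integrable_const 1)]
  simp

lemma integrable_integral_expAddChar_sub_one (hfin : (κ ∘ₘ P) {0}ᶜ ≠ ⊤)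
    (hnonneg : ∀ᵐ x ∂(κ ∘ₘ P), 0 ≤ x) {u : ℂ} (hu : u.re ≤ 0) :
    Integrable (fun p ↦ ∫ x, expAddChar u x ∂κ p - 1) P := by
  have hint := integrable_expAddChar_sub_one_comp hfin hnonneg hu
  rw [Measure.comp_eq_comp_const_apply] at hint
  exact hint.integral_comp.congr (integral_expAddChar_sub_one_ae_eq hnonneg hu)

/-- The mixture may have infinite mass at `0`, where the integrand vanishes. -/
lemma setIntegral_expAddChar_sub_one_comp (hfin : (κ ∘ₘ P) {0}ᶜ ≠ ⊤)
    (hnonneg : ∀ᵐ x ∂(κ ∘ₘ P), 0 ≤ x) {u : ℂ} (hu : u.re ≤ 0) :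
    ∫ x in {0}ᶜ, (expAddChar u x - 1) ∂(κ ∘ₘ P) = ∫ p, (∫ x, expAddChar u x ∂κ p - 1) ∂P := by
  have hint := integrable_expAddChar_sub_one_comp hfin hnonneg hu
  calc ∫ x in {0}ᶜ, (expAddChar u x - 1) ∂(κ ∘ₘ P)
      = ∫ x, (expAddChar u x - 1) ∂(κ ∘ₘ P) :=
        setIntegral_eq_integral_of_forall_compl_eq_zero fun x hx ↦ by simp_all
    _ = ∫ p, ∫ x, (expAddChar u x - 1) ∂κ p ∂P := by
        rw [Measure.comp_eq_comp_const_apply] at hint ⊢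
        exact Kernel.integral_comp hint
    _ = ∫ p, (∫ x, expAddChar u x ∂κ p - 1) ∂P :=
        integral_congr_ae (integral_expAddChar_sub_one_ae_eq hnonneg hu)

end Mixture

section Estimates

lemma lintegral_Ioc_ofReal_const_div {c δ t : ℝ} (hc : 0 ≤ c) (hδ : 0 < δ) (hδt : δ ≤ t) :
    ∫⁻ s in Set.Ioc δ t, ENNReal.ofReal (c / s) = ENNReal.ofReal (c * Real.log (t / δ)) := by
  have hcont : ContinuousOn (fun s : ℝ ↦ c / s) (Set.uIcc δ t) := by
    rw [Set.uIcc_of_le hδt]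
    exact continuousOn_const.div continuousOn_id fun s hs ↦ (hδ.trans_le hs.1).ne'
  rw [← ofReal_integral_eq_lintegral_ofReal hcont.intervalIntegrable.1,
    ← intervalIntegral.integral_of_le hδt]
  · simp_rw [div_eq_mul_inv c, intervalIntegral.integral_const_mul,
      integral_inv_of_pos hδ (hδ.trans_le hδt)]
  · filter_upwards [ae_restrict_mem measurableSet_Ioc] with s hs
      using div_nonneg hc (hδ.trans hs.1).le

lemma lintegral_ofReal_one_sub_exp_neg_le_volume {X : Type*} [MeasurableSpace X] (μ : Measure X)
    (f : X → ℝ) : ∫⁻ x, ENNReal.ofReal (1 - Real.exp (-f x)) ∂μ ≤ μ Set.univ :=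
  calc ∫⁻ x, ENNReal.ofReal (1 - Real.exp (-f x)) ∂μ ≤ ∫⁻ _, 1 ∂μ :=
        lintegral_mono fun _ ↦ ENNReal.ofReal_le_one.2 <| sub_le_self _ (Real.exp_nonneg _)
    _ = μ Set.univ := lintegral_one

lemma setLIntegral_ofReal_one_sub_exp_neg_le {f : ℝ → ℝ} {c δ t : ℝ} (hc : 0 ≤ c) (hδ : 0 < δ)
    (hf : ∀ s ∈ Set.Ioo 0 t, f s ≤ c / s) :
    ∫⁻ s in Set.Ioo 0 t, ENNReal.ofReal (1 - Real.exp (-f s)) ≤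
      ENNReal.ofReal (δ + c * |Real.log (t / δ)|) := by
  rcases le_total t δ with htδ | hδt
  · calc ∫⁻ s in Set.Ioo 0 t, ENNReal.ofReal (1 - Real.exp (-f s)) ≤ ENNReal.ofReal t := by
          simpa using lintegral_ofReal_one_sub_exp_neg_le_volume (volume.restrict (Set.Ioo 0 t)) f
      _ ≤ ENNReal.ofReal (δ + c * |Real.log (t / δ)|) :=
          ENNReal.ofReal_le_ofReal <| htδ.trans <| le_add_of_nonneg_right <| by positivity
  have hnear : ∫⁻ s in Set.Ioc 0 δ, ENNReal.ofReal (1 - Real.exp (-f s)) ≤ ENNReal.ofReal δ := by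
    simpa using lintegral_ofReal_one_sub_exp_neg_le_volume (volume.restrict (Set.Ioc 0 δ)) f
  have hfar : ∫⁻ s in Set.Ioo δ t, ENNReal.ofReal (1 - Real.exp (-f s)) ≤
      ENNReal.ofReal (c * |Real.log (t / δ)|) :=
    calc ∫⁻ s in Set.Ioo δ t, ENNReal.ofReal (1 - Real.exp (-f s))
        ≤ ∫⁻ s in Set.Ioo δ t, ENNReal.ofReal (c / s) := by
          refine setLIntegral_mono' measurableSet_Ioo fun s hs ↦ ENNReal.ofReal_le_ofReal ?_
          linarith [Real.add_one_le_exp (-f s), hf s ⟨hδ.trans hs.1, hs.2⟩]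
      _ ≤ ∫⁻ s in Set.Ioc δ t, ENNReal.ofReal (c / s) := lintegral_mono_set Set.Ioo_subset_Ioc_self
      _ = ENNReal.ofReal (c * Real.log (t / δ)) := lintegral_Ioc_ofReal_const_div hc hδ hδt
      _ ≤ ENNReal.ofReal (c * |Real.log (t / δ)|) := by gcongr; exact le_abs_self _
  calc ∫⁻ s in Set.Ioo 0 t, ENNReal.ofReal (1 - Real.exp (-f s))
      ≤ ∫⁻ s in Set.Ioc 0 δ ∪ Set.Ioo δ t, ENNReal.ofReal (1 - Real.exp (-f s)) :=
        lintegral_mono_set fun s hs ↦ (le_or_gt s δ).imp (⟨hs.1, ·⟩) (⟨·, hs.2⟩)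
    _ ≤ ENNReal.ofReal δ + ENNReal.ofReal (c * |Real.log (t / δ)|) :=
        (lintegral_union_le _ _ _).trans (add_le_add hnear hfar)
    _ = ENNReal.ofReal (δ + c * |Real.log (t / δ)|) :=
        (ENNReal.ofReal_add hδ.le (by positivity)).symm

lemma self_add_mul_abs_log_div_le {ξ : ℝ} (h0 : 0 < ξ) (h1 : ξ ≤ 1 / 2) {C t : ℝ} (hC : 0 ≤ C)
    (ht : 0 < t) :
    ξ + C * ξ * |Real.log (t / ξ)| ≤
      ((1 + C * |Real.log t|) / Real.log 2 + C) * (ξ * Real.log (1 / ξ)) := by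
  have hlog2 : 0 < Real.log 2 := Real.log_pos one_lt_two
  have hlog : Real.log 2 ≤ Real.log (1 / ξ) :=
    Real.log_le_log two_pos <| by rw [le_div_iff₀ h0]; linarith
  have habs : |Real.log (t / ξ)| ≤ |Real.log t| + Real.log (1 / ξ) := by
    rw [div_eq_mul_one_div, Real.log_mul ht.ne' (by positivity)]
    exact (abs_add_le _ _).trans_eq <| by rw [abs_of_pos (hlog2.trans_le hlog)]
  calc ξ + C * ξ * |Real.log (t / ξ)|
      ≤ ξ + C * ξ * (|Real.log t| + Real.log (1 / ξ)) := by gcongr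
    _ = ξ * (1 + C * |Real.log t|) * 1 + C * (ξ * Real.log (1 / ξ)) := by ring
    _ ≤ ξ * (1 + C * |Real.log t|) * (Real.log (1 / ξ) / Real.log 2)
        + C * (ξ * Real.log (1 / ξ)) := by gcongr; rwa [one_le_div hlog2]
    _ = ((1 + C * |Real.log t|) / Real.log 2 + C) * (ξ * Real.log (1 / ξ)) := by ring

lemma sFinite_of_lintegral_ne_top {X : Type*} [MeasurableSpace X] {μ : Measure X} {f : X → ℝ≥0∞}
    (hf : Measurable f) (hint : ∫⁻ x, f x ∂μ ≠ ⊤) (hne : ∀ᵐ x ∂μ, f x ≠ 0) : SFinite μ := by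
  have : IsFiniteMeasure (μ.withDensity f) := isFiniteMeasure_withDensity hint
  rw [← withDensity_inv_same hf hne ((ae_lt_top hf hint).mono fun _ ↦ ne_of_lt)]
  infer_instance

lemma measure_Ici_lt_top_of_integrableOn_exp_mul_sub_one {ν : Measure ℝ} {z : ℂ} (hz : z.re < 0)
    (h : IntegrableOn (fun ξ : ℝ ↦ Complex.exp (ξ * z) - 1) (Set.Ioi 0) ν) {c : ℝ} (hc : 0 < c) :
    ν (Set.Ici c) < ⊤ := by
  have hlt : Real.exp (c * z.re) < 1 := Real.exp_lt_one_iff.2 (mul_neg_of_pos_of_neg hc hz)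
  have hle {ξ : ℝ} (hξ : c ≤ ξ) : 1 - Real.exp (c * z.re) ≤ ‖Complex.exp (ξ * z) - 1‖ :=
    calc 1 - Real.exp (c * z.re) ≤ 1 - Real.exp (ξ * z.re) := by
          gcongr 1 - Real.exp ?_; exact mul_le_mul_of_nonpos_right hξ hz.le
      _ = ‖(1 : ℂ)‖ - ‖Complex.exp (ξ * z)‖ := by simp [Complex.norm_exp]
      _ ≤ ‖Complex.exp (ξ * z) - 1‖ := norm_sub_rev (1 : ℂ) _ ▸ norm_sub_norm_le _ _
  calc ν (Set.Ici c) = ν.restrict (Set.Ioi 0) (Set.Ici c) :=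
        (Measure.restrict_eq_self _ fun _ ↦ hc.trans_le).symm
    _ ≤ ν.restrict (Set.Ioi 0) {ξ | 1 - Real.exp (c * z.re) ≤ ‖Complex.exp (ξ * z) - 1‖} :=
        measure_mono fun _ ↦ hle
    _ < ⊤ := h.measure_norm_ge_lt_top (sub_pos.2 hlt)

end Estimates

section Riccati

/-- The solution `ψ(s, u)` of `∂ψ/∂s = (σ² / 2) ψ² - a ψ` with `ψ(0, u) = u`; the exponent in the
theorem is `ξ ψ(s, u)`. -/
noncomputable def riccatiFlow (a σ s : ℝ) (u : ℂ) : ℂ :=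
  u * Complex.exp (-(a : ℂ) * s) /
    (1 - ((σ : ℂ) ^ 2 / (2 * a)) * (1 - Complex.exp (-(a : ℂ) * s)) * u)

/-- The mean `1 / β` of the exponential jumps of the Bessel distribution with parameters `α, β`. -/
noncomputable def meanJump (a σ s : ℝ) : ℝ := σ ^ 2 / (2 * a) * (1 - Real.exp (-a * s))

/-- The ratio `α / ξ`, so that the Bessel distribution attached to `(s, ξ)` has a Poisson number of
exponential jumps with mean `ξ * jumpRate a σ s`. -/
noncomputable def jumpRate (a σ s : ℝ) : ℝ := Real.exp (-a * s) / meanJump a σ s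

@[fun_prop]
lemma measurable_meanJump (a σ : ℝ) : Measurable (meanJump a σ) := by
  unfold meanJump; fun_prop

@[fun_prop]
lemma measurable_jumpRate (a σ : ℝ) : Measurable (jumpRate a σ) := by
  unfold jumpRate; fun_prop

variable {a σ s : ℝ}

lemma meanJump_pos (ha : 0 < a) (hσ : 0 < σ) (hs : 0 < s) : 0 < meanJump a σ s := by
  have : Real.exp (-a * s) < 1 := Real.exp_lt_one_iff.2 (by nlinarith)
  exact mul_pos (by positivity) (sub_pos.2 this)

lemma jumpRate_pos (ha : 0 < a) (hσ : 0 < σ) (hs : 0 < s) : 0 < jumpRate a σ s :=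
  div_pos (Real.exp_pos _) (meanJump_pos ha hσ hs)

lemma jumpRate_le (ha : 0 < a) (hσ : 0 < σ) (hs : 0 < s) : jumpRate a σ s ≤ 2 / σ ^ 2 / s := by
  have hexp : Real.exp (-a * s) * (1 + a * s) ≤ 1 := by
    calc Real.exp (-a * s) * (1 + a * s) ≤ Real.exp (-a * s) * Real.exp (a * s) := by
          gcongr; linarith [Real.add_one_le_exp (a * s)]
      _ = 1 := by rw [← Real.exp_add]; simp
  rw [jumpRate, div_le_iff₀ (meanJump_pos ha hσ hs), meanJump]
  calc Real.exp (-a * s) ≤ (1 - Real.exp (-a * s)) / (a * s) := by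
        rw [le_div_iff₀ (by positivity)]; linarith
    _ = 2 / σ ^ 2 / s * (σ ^ 2 / (2 * a) * (1 - Real.exp (-a * s))) := by field_simp

lemma one_le_re_one_sub_mul {θ : ℝ} (hθ : 0 ≤ θ) {u : ℂ} (hu : u.re ≤ 0) :
    1 ≤ (1 - θ * u : ℂ).re := by
  simpa using mul_nonpos_of_nonneg_of_nonpos hθ hu

lemma re_inv_lt_one {w : ℂ} (hre : 1 ≤ w.re) (hw : w ≠ 1) : w⁻¹.re < 1 := by
  have hnormSq : w.re < Complex.normSq w := by
    rw [Complex.normSq_apply]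
    rcases hre.lt_or_eq with h | h
    · nlinarith [mul_self_nonneg w.im]
    · have him : w.im ≠ 0 := fun h0 ↦ hw (Complex.ext h.symm h0)
      rw [← h]
      linarith [mul_self_pos.2 him]
  rw [Complex.inv_re, div_lt_one (by linarith)]
  exact hnormSq

lemma riccatiFlow_eq (ha : 0 < a) (hσ : 0 < σ) (hs : 0 < s) {u : ℂ} (hu : u.re ≤ 0) :
    riccatiFlow a σ s u = jumpRate a σ s * ((1 - meanJump a σ s * u)⁻¹ - 1) := by
  have hθ := meanJump_pos ha hσ hs
  have hθ' : (meanJump a σ s : ℂ) ≠ 0 := mod_cast hθ.ne'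
  have hD : 1 - meanJump a σ s * u ≠ 0 := fun h ↦ by
    have := one_le_re_one_sub_mul hθ.le hu
    norm_num [h] at this
  calc riccatiFlow a σ s u
      = u * Complex.exp (-(a : ℂ) * s) / (1 - meanJump a σ s * u) := by
        rw [riccatiFlow, meanJump]; push_cast; rfl
    _ = jumpRate a σ s * ((1 - meanJump a σ s * u)⁻¹ - 1) := by
        rw [jumpRate, inv_eq_one_div, div_sub_one hD]
        push_cast
        field_simp
        ring

lemma riccatiFlow_re_neg (ha : 0 < a) (hσ : 0 < σ) (hs : 0 < s) {u : ℂ} (hu : u.re ≤ 0)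
    (hu0 : u ≠ 0) : (riccatiFlow a σ s u).re < 0 := by
  have hθ := meanJump_pos ha hσ hs
  have hne : 1 - meanJump a σ s * u ≠ 1 := by simp [hθ.ne', hu0]
  rw [riccatiFlow_eq ha hσ hs hu, Complex.re_ofReal_mul, Complex.sub_re, Complex.one_re]
  exact mul_neg_of_pos_of_neg (jumpRate_pos ha hσ hs) <|
    sub_neg.2 <| re_inv_lt_one (one_le_re_one_sub_mul hθ.le hu) hne

end Riccati

section JumpKernel

/-- The Bessel distribution attached to `(s, ξ)`, whose parameters are `α = ξ * jumpRate a σ s` and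
`β = (meanJump a σ s)⁻¹`. -/
noncomputable def jumpKernel (a σ : ℝ) : Kernel (ℝ × ℝ) ℝ :=
  besselKernel.comap (fun p ↦ ((p.2 * jumpRate a σ p.1).toNNReal, meanJump a σ p.1))
    (by fun_prop)

instance (a σ : ℝ) : IsMarkovKernel (jumpKernel a σ) := Kernel.IsMarkovKernel.comap _ _

variable {a σ s ξ : ℝ}

lemma jumpKernel_apply : jumpKernel a σ (s, ξ) =
    besselKernel ((ξ * jumpRate a σ s).toNNReal, meanJump a σ s) :=
  Kernel.comap_apply _ _ _

lemma ae_nonneg_jumpKernel (ha : 0 < a) (hσ : 0 < σ) (hs : 0 < s) :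
    ∀ᵐ x ∂jumpKernel a σ (s, ξ), 0 ≤ x := by
  rw [jumpKernel_apply]
  exact ae_nonneg_besselKernel _ (meanJump_pos ha hσ hs).le

lemma integral_expAddChar_jumpKernel (ha : 0 < a) (hσ : 0 < σ) (hs : 0 < s) (hξ : 0 ≤ ξ) {u : ℂ}
    (hu : u.re ≤ 0) :
    ∫ x, expAddChar u x ∂jumpKernel a σ (s, ξ) = Complex.exp (ξ * riccatiFlow a σ s u) := by
  rw [jumpKernel_apply, integral_expAddChar_besselKernel _ (meanJump_pos ha hσ hs).le hu,
    riccatiFlow_eq ha hσ hs hu,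
    Real.coe_toNNReal _ (mul_nonneg hξ (jumpRate_pos ha hσ hs).le), Complex.ofReal_mul, mul_assoc]

lemma jumpKernel_compl_singleton_zero_le (ha : 0 < a) (hσ : 0 < σ) (hs : 0 < s) (hξ : 0 ≤ ξ) :
    jumpKernel a σ (s, ξ) {0}ᶜ ≤ ENNReal.ofReal (1 - Real.exp (-(ξ * jumpRate a σ s))) := by
  rw [jumpKernel_apply]
  simpa only [Real.coe_toNNReal _ (mul_nonneg hξ (jumpRate_pos ha hσ hs).le)] using
    besselKernel_compl_singleton_zero_le (ξ * jumpRate a σ s).toNNReal (meanJump a σ s)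

end JumpKernel

section JumpMeasure

variable {a σ t : ℝ} {ν : Measure ℝ}

lemma sFinite_restrict_Ioi
    (hlog : ∫⁻ ξ in Set.Ioo (0 : ℝ) 1, ENNReal.ofReal (ξ * Real.log (1 / ξ)) ∂ν < ⊤)
    (hlarge : ν (Set.Ici 1) < ⊤) : SFinite (ν.restrict (Set.Ioi 0)) := by
  have : IsFiniteMeasure (ν.restrict (Set.Ici 1)) := isFiniteMeasure_restrict.2 hlarge.ne
  have : SFinite (ν.restrict (Set.Ioo 0 1)) := by
    refine sFinite_of_lintegral_ne_top (by fun_prop) hlog.ne ?_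
    filter_upwards [ae_restrict_mem measurableSet_Ioo] with ξ hξ
    exact (ENNReal.ofReal_pos.2 <|
      mul_pos hξ.1 <| Real.log_pos <| one_lt_one_div hξ.1 hξ.2).ne'
  rw [← Set.Ioo_union_Ici_eq_Ioi (zero_lt_one' ℝ), Measure.restrict_union
    (Set.Iio_disjoint_Ici le_rfl |>.mono_left Set.Ioo_subset_Iio_self) measurableSet_Ici]
  infer_instance

lemma setLIntegral_one_sub_exp_neg_mul_jumpRate_le (ha : 0 < a) (hσ : 0 < σ) (ht : 0 < t) {ξ : ℝ}
    (hξ : ξ ∈ Set.Ioo 0 (1 / 2)) :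
    ∫⁻ s in Set.Ioo 0 t, ENNReal.ofReal (1 - Real.exp (-(ξ * jumpRate a σ s))) ≤
      ENNReal.ofReal ((1 + 2 / σ ^ 2 * |Real.log t|) / Real.log 2 + 2 / σ ^ 2) *
        ENNReal.ofReal (ξ * Real.log (1 / ξ)) := by
  have hrate : ∀ s ∈ Set.Ioo 0 t, ξ * jumpRate a σ s ≤ 2 / σ ^ 2 * ξ / s := fun s hs ↦ by
    rw [mul_comm _ ξ, mul_div_assoc]
    exact mul_le_mul_of_nonneg_left (jumpRate_le ha hσ hs.1) hξ.1.le
  rw [← ENNReal.ofReal_mul (by positivity)]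
  calc ∫⁻ s in Set.Ioo 0 t, ENNReal.ofReal (1 - Real.exp (-(ξ * jumpRate a σ s)))
      ≤ ENNReal.ofReal (ξ + 2 / σ ^ 2 * ξ * |Real.log (t / ξ)|) :=
        setLIntegral_ofReal_one_sub_exp_neg_le (mul_nonneg (by positivity) hξ.1.le) hξ.1 hrate
    _ ≤ _ := ENNReal.ofReal_le_ofReal <|
        self_add_mul_abs_log_div_le hξ.1 hξ.2.le (by positivity) ht

lemma lintegral_one_sub_exp_neg_mul_jumpRate_lt_top (ha : 0 < a) (hσ : 0 < σ) (ht : 0 < t)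
    (hlog : ∫⁻ ξ in Set.Ioo (0 : ℝ) 1, ENNReal.ofReal (ξ * Real.log (1 / ξ)) ∂ν < ⊤)
    (hlarge : ν (Set.Ici (1 / 2)) < ⊤) :
    ∫⁻ ξ in Set.Ioi 0, (∫⁻ s in Set.Ioo 0 t,
      ENNReal.ofReal (1 - Real.exp (-(ξ * jumpRate a σ s)))) ∂ν < ⊤ := by
  rw [← Set.Ioo_union_Ici_eq_Ioi (show (0 : ℝ) < 1 / 2 by norm_num)]
  refine (lintegral_union_le _ _ _).trans_lt <| ENNReal.add_lt_top.2 ⟨?_, ?_⟩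
  · calc _ ≤ _ := setLIntegral_mono' measurableSet_Ioo fun ξ ↦
          setLIntegral_one_sub_exp_neg_mul_jumpRate_le ha hσ ht
      _ ≤ _ := lintegral_mono_set <| Set.Ioo_subset_Ioo_right (by norm_num : (1 / 2 : ℝ) ≤ 1)
      _ < ⊤ := by
          rw [lintegral_const_mul _ (by fun_prop)]
          exact ENNReal.mul_lt_top ENNReal.ofReal_lt_top hlog
  · calc _ ≤ ∫⁻ _ in Set.Ici (1 / 2), ENNReal.ofReal t ∂ν :=
          setLIntegral_mono' measurableSet_Ici fun ξ _ ↦ by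
            simpa using lintegral_ofReal_one_sub_exp_neg_le_volume (volume.restrict (Set.Ioo 0 t))
              fun s ↦ ξ * jumpRate a σ s
      _ < ⊤ := by
          rw [setLIntegral_const]
          exact ENNReal.mul_lt_top ENNReal.ofReal_lt_top hlarge

/-- When `ν` is infinite near `1`, which the logarithmic condition allows since `log 1 = 0`, the
integrals over `ξ` diverge and take the default value `0`. -/
lemma setIntegral_riccatiFlow_eq_zero (ha : 0 < a) (hσ : 0 < σ) {c : ℝ} (hc : 0 < c)
    (hlarge : ν (Set.Ici c) = ⊤) {s : ℝ} (hs : 0 < s) {u : ℂ} (hu : u.re ≤ 0) :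
    ∫ ξ in Set.Ioi 0, (Complex.exp (ξ * riccatiFlow a σ s u) - 1) ∂ν = 0 := by
  rcases eq_or_ne u 0 with rfl | hu0
  · simp [riccatiFlow]
  · exact integral_undef fun h ↦ (measure_Ici_lt_top_of_integrableOn_exp_mul_sub_one
      (riccatiFlow_re_neg ha hσ hs hu hu0) h hc).ne hlarge

/-- The product of the time and jump intensities `ds` on `(0, t)` and `ν` on `(0, ∞)`, against which
the Bessel distributions are mixed. -/
noncomputable def jumpIntensity (t : ℝ) (ν : Measure ℝ) : Measure (ℝ × ℝ) :=
  (volume.restrict (Set.Ioo 0 t)).prod (ν.restrict (Set.Ioi 0))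

lemma ae_pos_jumpIntensity : ∀ᵐ p ∂jumpIntensity t ν, 0 < p.1 ∧ 0 < p.2 := by
  filter_upwards [Measure.quasiMeasurePreserving_fst.ae (ae_restrict_mem measurableSet_Ioo),
    Measure.quasiMeasurePreserving_snd.ae (ae_restrict_mem measurableSet_Ioi)] with p h₁ h₂
    using ⟨h₁.1, h₂⟩

lemma ae_nonneg_jumpKernel_comp (ha : 0 < a) (hσ : 0 < σ) :
    ∀ᵐ x ∂(jumpKernel a σ ∘ₘ jumpIntensity t ν), 0 ≤ x := by
  refine (Measure.ae_comp_iff measurableSet_Ici).2 ?_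
  filter_upwards [ae_pos_jumpIntensity] with p hp using ae_nonneg_jumpKernel ha hσ hp.1

/-- This mass is the paper's `λ = ∫∫ (1 - e^{-α}) ν(dξ) ds`. -/
lemma jumpKernel_comp_compl_singleton_zero_ne_top [SFinite (ν.restrict (Set.Ioi 0))] (ha : 0 < a)
    (hσ : 0 < σ) (ht : 0 < t)
    (hlog : ∫⁻ ξ in Set.Ioo (0 : ℝ) 1, ENNReal.ofReal (ξ * Real.log (1 / ξ)) ∂ν < ⊤)
    (hlarge : ν (Set.Ici (1 / 2)) < ⊤) :
    (jumpKernel a σ ∘ₘ jumpIntensity t ν) {0}ᶜ ≠ ⊤ := by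
  refine ne_of_lt ?_
  calc (jumpKernel a σ ∘ₘ jumpIntensity t ν) {0}ᶜ
      = ∫⁻ p, jumpKernel a σ p {0}ᶜ ∂jumpIntensity t ν :=
        Measure.bind_apply (measurableSet_singleton 0).compl (jumpKernel a σ).aemeasurable
    _ ≤ ∫⁻ p, ENNReal.ofReal (1 - Real.exp (-(p.2 * jumpRate a σ p.1))) ∂jumpIntensity t ν := by
        refine lintegral_mono_ae ?_
        filter_upwards [ae_pos_jumpIntensity] with p hp
          using jumpKernel_compl_singleton_zero_le ha hσ hp.1 hp.2.le
    _ = ∫⁻ ξ in Set.Ioi 0, (∫⁻ s in Set.Ioo 0 t,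
          ENNReal.ofReal (1 - Real.exp (-(ξ * jumpRate a σ s)))) ∂ν :=
        lintegral_prod_symm' _ (by fun_prop)
    _ < ⊤ := lintegral_one_sub_exp_neg_mul_jumpRate_lt_top ha hσ ht hlog hlarge

lemma setIntegral_riccatiFlow_eq_jumpKernel_comp [SFinite (ν.restrict (Set.Ioi 0))] (ha : 0 < a)
    (hσ : 0 < σ)
    (hfin : (jumpKernel a σ ∘ₘ jumpIntensity t ν) {0}ᶜ ≠ ⊤) {u : ℂ} (hu : u.re ≤ 0) :
    ∫ s in Set.Ioo 0 t, ∫ ξ in Set.Ioi 0, (Complex.exp (ξ * riccatiFlow a σ s u) - 1) ∂ν =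
      ∫ x in {0}ᶜ, (expAddChar u x - 1) ∂(jumpKernel a σ ∘ₘ jumpIntensity t ν) := by
  have hnonneg := ae_nonneg_jumpKernel_comp (t := t) (ν := ν) ha hσ
  have hae : (fun p ↦ ∫ x, expAddChar u x ∂jumpKernel a σ p - 1) =ᵐ[jumpIntensity t ν]
      fun p ↦ Complex.exp (p.2 * riccatiFlow a σ p.1 u) - 1 := by
    filter_upwards [ae_pos_jumpIntensity] with p hp
    rw [← integral_expAddChar_jumpKernel ha hσ hp.1 hp.2.le hu]
  rw [setIntegral_expAddChar_sub_one_comp hfin hnonneg hu, integral_congr_ae hae]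
  exact (integral_prod _ <| (integrable_integral_expAddChar_sub_one hfin hnonneg hu).congr hae).symm

lemma exists_isFiniteMeasure_integral_riccatiFlow_eq (ha : 0 < a) (hσ : 0 < σ) (ht : 0 < t)
    (hlog : ∫⁻ ξ in Set.Ioo (0 : ℝ) 1, ENNReal.ofReal (ξ * Real.log (1 / ξ)) ∂ν < ⊤) :
    ∃ M : Measure ℝ, IsFiniteMeasure M ∧ (∀ᵐ x ∂M, 0 ≤ x) ∧ ∀ u : ℂ, u.re ≤ 0 →
      ∫ s in Set.Ioo 0 t, ∫ ξ in Set.Ioi 0, (Complex.exp (ξ * riccatiFlow a σ s u) - 1) ∂ν =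
        ∫ x, (expAddChar u x - 1) ∂M := by
  by_cases htop : ν (Set.Ici (1 / 2)) = ⊤
  · refine ⟨0, inferInstance, by simp, fun u hu ↦ ?_⟩
    rw [integral_zero_measure]
    exact setIntegral_eq_zero_of_forall_eq_zero fun s hs ↦
      setIntegral_riccatiFlow_eq_zero ha hσ one_half_pos htop hs.1 hu
  · have hlarge := Ne.lt_top htop
    have : SFinite (ν.restrict (Set.Ioi 0)) := sFinite_restrict_Ioi hlog <|
      (measure_mono <| Set.Ici_subset_Ici.2 one_half_lt_one.le).trans_lt hlarge
    have hfin := jumpKernel_comp_compl_singleton_zero_ne_top ha hσ ht hlog hlarge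
    exact ⟨(jumpKernel a σ ∘ₘ jumpIntensity t ν).restrict {0}ᶜ, isFiniteMeasure_restrict.2 hfin,
      ae_restrict_of_ae (ae_nonneg_jumpKernel_comp ha hσ),
      fun u hu ↦ setIntegral_riccatiFlow_eq_jumpKernel_comp ha hσ hfin hu⟩

end JumpMeasure

lemma exists_isProbabilityMeasure_eq_smul {X : Type*} [MeasurableSpace X] (M : Measure X)
    [IsFiniteMeasure M] {p : X → Prop} (hp : MeasurableSet {x | p x}) (hM : ∀ᵐ x ∂M, p x)
    (hne : ∃ x, p x) :
    ∃ ρ : Measure X, IsProbabilityMeasure ρ ∧ (∀ᵐ x ∂ρ, p x) ∧ M = M Set.univ • ρ := by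
  rcases eq_zero_or_neZero M with rfl | _
  · obtain ⟨x₀, hx₀⟩ := hne
    exact ⟨Measure.dirac x₀, inferInstance, (ae_dirac_iff hp).2 hx₀, by simp⟩
  · refine ⟨(M Set.univ)⁻¹ • M, inferInstance, Measure.ae_smul_measure hM _, ?_⟩
    rw [smul_smul, ENNReal.mul_inv_cancel (NeZero.ne _) (measure_ne_top _ _), one_smul]

lemma exists_integral_riccatiFlow_eq_mul_sub_one {a σ t : ℝ} {ν : Measure ℝ} (ha : 0 < a)
    (hσ : 0 < σ) (ht : 0 < t)
    (hlog : ∫⁻ ξ in Set.Ioo (0 : ℝ) 1, ENNReal.ofReal (ξ * Real.log (1 / ξ)) ∂ν < ⊤) :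
    ∃ (r : ℝ≥0) (ρ : Measure ℝ), IsProbabilityMeasure ρ ∧ (∀ᵐ x ∂ρ, 0 ≤ x) ∧
      ∀ u : ℂ, u.re ≤ 0 →
        ∫ s in Set.Ioo 0 t, ∫ ξ in Set.Ioi 0, (Complex.exp (ξ * riccatiFlow a σ s u) - 1) ∂ν =
          r * (∫ x, expAddChar u x ∂ρ - 1) := by
  obtain ⟨M, _, hM, hMu⟩ := exists_isFiniteMeasure_integral_riccatiFlow_eq ha hσ ht hlog
  obtain ⟨ρ, _, hρ, hMρ⟩ :=
    exists_isProbabilityMeasure_eq_smul M measurableSet_Ici hM ⟨0, le_rfl⟩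
  refine ⟨(M Set.univ).toNNReal, ρ, inferInstance, hρ, fun u hu ↦ ?_⟩
  calc _ = ∫ x, (expAddChar u x - 1) ∂(M Set.univ • ρ) := hMρ ▸ hMu u hu
    _ = (M Set.univ).toNNReal * (∫ x, expAddChar u x ∂ρ - 1) := by
        rw [integral_smul_measure, integral_sub (integrable_expAddChar hρ hu) (integrable_const 1)]
        simp [ENNReal.toReal]


/-- Under `∫_{(0,1)} ξ ln(1/ξ) ν(dξ) < ∞` and `ν((1,∞)) < ∞`, the function
`u ↦ exp(∫₀^t ∫_{(0,∞)} (exp(ξ u e^{-as}/(1 - (σ²/(2a))(1-e^{-as})u)) - 1) ν(dξ) ds)` on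
`{Re u ≤ 0}` equals `exp(λ(ρ̂(u)-1))` for a finite `λ ≥ 0` and a probability measure `ρ` on
`[0,∞)`; in particular it is the transform of a compound Poisson distribution, which assigns
mass `e^{-λ} > 0` to `{0}`. -/
theorem transform_compound_poisson (a σ : ℝ) (ha : 0 < a) (hσ : 0 < σ)
    (ν : Measure ℝ)
    (hν0 : ν (Set.Iic (0 : ℝ)) = 0)
    (hν1 : ∫⁻ ξ in Set.Ioo (0 : ℝ) 1, ENNReal.ofReal (ξ * Real.log (1 / ξ)) ∂ν < ⊤)
    (hν2 : ν (Set.Ioi (1 : ℝ)) < ⊤)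
    (t : ℝ) (ht : 0 < t) :
    ∃ lam : ℝ, 0 ≤ lam ∧ ∃ ρ : Measure ℝ, IsProbabilityMeasure ρ ∧ ρ (Set.Iio (0 : ℝ)) = 0 ∧
      (∀ u : ℂ, u.re ≤ 0 →
        Complex.exp (∫ s in Set.Ioo (0 : ℝ) t, ∫ ξ in Set.Ioi (0 : ℝ),
            (Complex.exp ((ξ : ℂ) * u * Complex.exp (-(a : ℂ) * s) /
                (1 - ((σ : ℂ)^2 / (2 * a)) * (1 - Complex.exp (-(a : ℂ) * s)) * u)) - 1)
              ∂ν) =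
          Complex.exp ((lam : ℂ) * ((∫ x : ℝ, Complex.exp (u * x) ∂ρ) - 1))) ∧
      ∃ μcp : Measure ℝ, IsProbabilityMeasure μcp ∧
        (∀ u : ℂ, u.re ≤ 0 →
          ∫ x : ℝ, Complex.exp (u * x) ∂μcp =
            Complex.exp ((lam : ℂ) * ((∫ x : ℝ, Complex.exp (u * x) ∂ρ) - 1))) ∧
        μcp {0} ≥ ENNReal.ofReal (Real.exp (-lam)) := by
  obtain ⟨r, ρ, _, hρ, hr⟩ := exists_integral_riccatiFlow_eq_mul_sub_one ha hσ ht hν1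
  refine ⟨r, r.coe_nonneg, ρ, inferInstance, by simpa only [ae_iff, not_le] using! hρ,
    fun u hu ↦ ?_, compoundPoisson ρ r, inferInstance, fun u hu ↦ ?_, ?_⟩
  · simpa only [riccatiFlow, mul_assoc, mul_div_assoc] using! congrArg Complex.exp (hr u hu)
  · exact integral_addChar_compoundPoisson (measurable_expAddChar u) (integrable_expAddChar hρ hu) r
  · exact exp_neg_le_compoundPoisson_singleton_zero ρ r
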